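/- arXiv:2109.05700 — 6 statements merged into one kernel-verified Lean document; each statement's English description precedes it below -/
import Mathlib

section
/- Lower bound on the W₋₁ branch of the Lambert W function: for every real number x with −1/e² ≤ x < 0 and every real number w such that w ≤ −1 and w·exp(w) = x, one has w ≥ log(−x) − 4·log(−log(−x)). -/
/-!
Put `L = -log (-x)`. Taking logarithms in `w * exp w = x` gives `-w = L + log (-w)`, so a lower
bound on `w` is an upper bound on `log (-w)`. Since `log u ≤ u / 2`, this identity yields
`-w ≤ 2 * L`, and `2 * L ≤ L ^ 2` as soon as `2 ≤ L`; hence `log (-w) ≤ 2 * log L`.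
-/

open Real

lemma two_mul_log_le_self {u : ℝ} (hu : 0 < u) : 2 * log u ≤ u :=
  two_mul_le_exp.trans_eq (exp_log hu)

lemma log_neg_mul_exp {w : ℝ} (hw : w ≠ 0) : log (-(w * exp w)) = log (-w) + w := by
  rw [← neg_mul, log_mul (neg_ne_zero.mpr hw) (exp_ne_zero w), log_exp]

lemma neg_le_two_mul_neg_log_neg_mul_exp {w : ℝ} (hw : w < 0) :
    -w ≤ 2 * -log (-(w * exp w)) := by
  have log_bound : 2 * log (-w) ≤ -w := two_mul_log_le_self (neg_pos.mpr hw)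
  linarith [log_neg_mul_exp hw.ne]

lemma natCast_le_neg_log_neg {n : ℕ} {x : ℝ} (hx1 : -1 / exp 1 ^ n ≤ x) (hx2 : x < 0) :
    n ≤ -log (-x) := by
  have exp_neg_n : exp (-n) = -(-1 / exp 1 ^ n) := by
    rw [exp_neg, exp_one_pow, neg_div, neg_neg, one_div]
  have neg_x_le : -x ≤ exp (-n) := exp_neg_n ▸ neg_le_neg hx1
  exact le_neg_of_le_neg ((log_le_iff_le_exp (neg_pos.mpr hx2)).mpr neg_x_le)

theorem lambertW_neg1_lower_bound_general {x w : ℝ}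
    (hx1 : -1 / exp 1 ^ 2 ≤ x) (hx2 : x < 0) (hw : w * exp w = x) :
    log (-x) - 2 * log (-log (-x)) ≤ w := by
  have w_neg : w < 0 := neg_of_mul_neg_left (hw ▸ hx2) (exp_pos w).le
  have two_le : 2 ≤ -log (-x) := mod_cast natCast_le_neg_log_neg hx1 hx2
  have log_neg_w_le : log (-w) ≤ 2 * log (-log (-x)) := calc
    log (-w) ≤ log ((-log (-x)) ^ 2) := by
      refine log_le_log (neg_pos.mpr w_neg) ?_
      calc -w ≤ 2 * -log (-x) := hw ▸ neg_le_two_mul_neg_log_neg_mul_exp w_neg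
        _ ≤ -log (-x) * -log (-x) := by gcongr
        _ = (-log (-x)) ^ 2 := (sq _).symm
    _ = 2 * log (-log (-x)) := by rw [log_pow, Nat.cast_ofNat]
  have log_neg_x : log (-x) = log (-w) + w := hw ▸ log_neg_mul_exp w_neg.ne
  linarith

/-- Lower bound on the `W₋₁` branch of the Lambert W function: for every real `x` with
`-1/e² ≤ x < 0` and every real `w ≤ -1` with `w * exp w = x`, one has
`w ≥ log(-x) - 4 * log(-log(-x))`. -/
theorem lambertW_neg1_lower_bound (x w : ℝ)
    (hx1 : -1 / Real.exp 1 ^ 2 ≤ x) (hx2 : x < 0)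
    (hw1 : w ≤ -1) (hw2 : w * Real.exp w = x) :
    Real.log (-x) - 4 * Real.log (-Real.log (-x)) ≤ w := by
  have two_le : 2 ≤ -log (-x) := mod_cast natCast_le_neg_log_neg hx1 hx2
  linarith [log_nonneg (one_le_two.trans two_le), lambertW_neg1_lower_bound_general hx1 hx2 hw2]
end

section
/- Upper bound on the W₋₁ branch of the Lambert W function: for every real number x with −1/e² ≤ x < 0 and every real number w such that w ≤ −1 and w·exp(w) = x, one has w ≤ log(−x) − (1/4)·log(−log(−x)). -/
/-! Taking logarithms in `w * exp w = x` gives `w = log (-x) - log (-w)`. For `w ≤ -1` this yields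
`-log (-x) ≤ -w`, and one more logarithm gives the bound with coefficient `1`. Since
`log (-w) ≤ -w - 1`, also `-log (-x) ≥ 1`, so `log (-log (-x)) ≥ 0` and the coefficient may be
lowered. -/

theorem log_neg_mul_exp_self {w : ℝ} (hw : w ≠ 0) :
    Real.log (-(w * Real.exp w)) = Real.log (-w) + w := by
  rw [← neg_mul, Real.log_mul (neg_ne_zero.mpr hw) (Real.exp_ne_zero w), Real.log_exp]

theorem one_le_neg_log_neg_mul_exp_self {w : ℝ} (hw : w < 0) :
    1 ≤ -Real.log (-(w * Real.exp w)) := by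
  have hlog : Real.log (-w) ≤ -w - 1 := Real.log_le_sub_one_of_pos (neg_pos.mpr hw)
  linarith [log_neg_mul_exp_self hw.ne]

theorem neg_log_neg_mul_exp_self_le_neg {w : ℝ} (hw : w ≤ -1) :
    -Real.log (-(w * Real.exp w)) ≤ -w := by
  have hlog : 0 ≤ Real.log (-w) := Real.log_nonneg (le_neg_of_le_neg hw)
  linarith [log_neg_mul_exp_self (show w ≠ 0 by linarith)]

theorem lambertW_neg1_upper_bound_general {x w c : ℝ} (hc : c ≤ 1) (hw : w ≤ -1)
    (hwx : w * Real.exp w = x) :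
    w ≤ Real.log (-x) - c * Real.log (-Real.log (-x)) := by
  subst hwx
  have hw_neg : w < 0 := by linarith
  set L := -Real.log (-(w * Real.exp w))
  have one_le_L : 1 ≤ L := one_le_neg_log_neg_mul_exp_self hw_neg
  calc
    w = Real.log (-(w * Real.exp w)) - Real.log (-w) := by
      rw [log_neg_mul_exp_self hw_neg.ne, add_sub_cancel_left]
    _ ≤ Real.log (-(w * Real.exp w)) - Real.log L := by
      gcongr
      exact neg_log_neg_mul_exp_self_le_neg hw
    _ ≤ Real.log (-(w * Real.exp w)) - c * Real.log L := by
      gcongr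
      exact mul_le_of_le_one_left (Real.log_nonneg one_le_L) hc

/-- Upper bound on the `W₋₁` branch of the Lambert W function: for every real `x` with
`-1/e² ≤ x < 0` and every real `w ≤ -1` with `w * exp w = x`, one has
`w ≤ log(-x) - (1/4) * log(-log(-x))`. -/
theorem lambertW_neg1_upper_bound (x w : ℝ)
    (hx1 : -1 / Real.exp 1 ^ 2 ≤ x) (hx2 : x < 0)
    (hw1 : w ≤ -1) (hw2 : w * Real.exp w = x) :
    w ≤ Real.log (-x) - 1 / 4 * Real.log (-Real.log (-x)) :=
  lambertW_neg1_upper_bound_general (by norm_num) hw1 hw2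
end

section
/- Time-difference bound for confidence radii (Lemma 4 of the paper): let c̄ > e be a real constant and define α(t) = sqrt(2·log(c̄·t)/t) for real t ≥ 1. Given real numbers Δ ∈ (0,1) and σ > 1 with σ·Δ ≤ 1, suppose t̃ ≥ 1 and t′ ≥ 1 are real numbers satisfying α(t̃) = σ·Δ/8 and α(t′) = Δ/8. Then t′ − t̃ ≤ ( (128/Δ²)·log(128·c̄/Δ²) − (128/(σ²·Δ²))·log(128·c̄/(σ²·Δ²)) ) + ( (512/Δ²)·log(log(128·c̄/Δ²)) − (32/(σ²·Δ²))·log(log(128·c̄/(σ²·Δ²))) ). -/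
/-!
Squaring `α(t) = ε` gives `t = A x` with `A = 2 / ε²` and `x = log (c t)`, and taking logarithms of
`c t = A c x` gives `log (A c) = x - log x`. Writing `L` for this quantity, `t = A (L + log x)`, so
it remains to compare `log x` with `log L`: since `L ≤ x ≤ 2 L ≤ L²` for `L ≥ 2`, we have
`log L ≤ log x ≤ 2 log L`. The lower bound is applied at `t̃` and the upper one at `t'`.
-/

open Real

section SubLog

variable {x : ℝ}

theorem one_le_sub_log (hx : 0 < x) : 1 ≤ x - log x := by
  linarith [log_le_sub_one_of_pos hx]

theorem log_sub_log_le_log (hx : 1 ≤ x) : log (x - log x) ≤ log x := by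
  have hpos : 0 < x - log x := one_pos.trans_le (one_le_sub_log (one_pos.trans_le hx))
  exact log_le_log hpos (sub_le_self x (log_nonneg hx))

theorem log_le_half (hx : 0 < x) : log x ≤ x / 2 := by
  have hlog : log (x / 2) ≤ x / 2 - 1 := log_le_sub_one_of_pos (half_pos hx)
  rw [log_div hx.ne' two_ne_zero] at hlog
  linarith [log_two_lt_d9]

theorem log_le_two_mul_log_sub_log (hx : 0 < x) (h : 2 ≤ x - log x) :
    log x ≤ 2 * log (x - log x) := by
  have hsq : x ≤ (x - log x) ^ 2 := by
    calc x ≤ 2 * (x - log x) := by linarith [log_le_half hx]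
      _ ≤ (x - log x) ^ 2 := by rw [sq]; gcongr
  calc log x ≤ log ((x - log x) ^ 2) := log_le_log hx hsq
    _ = 2 * log (x - log x) := by rw [log_pow, Nat.cast_ofNat]

end SubLog

section EqMulLog

variable {A c t : ℝ}

theorem log_mul_eq_sub_log_of_eq_mul_log (hct : c * t ≠ 0) (h : t = A * log (c * t)) :
    log (A * c) = log (c * t) - log (log (c * t)) := by
  have hlog : log (c * t) ≠ 0 := fun h0 =>
    right_ne_zero_of_mul hct (by rw [h, h0, mul_zero])
  have hAc : A * c = c * t / log (c * t) := by
    rw [eq_div_iff hlog]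
    linear_combination -c * h
  rw [hAc, log_div hct hlog]

theorem mul_log_add_log_log_le_of_eq_mul_log (hA : 0 ≤ A) (hct : exp 1 ≤ c * t)
    (h : t = A * log (c * t)) : A * (log (A * c) + log (log (A * c))) ≤ t := by
  have hpos : 0 < c * t := (exp_pos 1).trans_le hct
  have hL : log (A * c) = log (c * t) - log (log (c * t)) :=
    log_mul_eq_sub_log_of_eq_mul_log hpos.ne' h
  have hloglog : log (log (A * c)) ≤ log (log (c * t)) := by
    rw [hL]
    exact log_sub_log_le_log ((le_log_iff_exp_le hpos).mpr hct)
  calc A * (log (A * c) + log (log (A * c))) ≤ A * log (c * t) := by gcongr; linarith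
    _ = t := h.symm

theorem le_mul_log_add_two_mul_log_log_of_eq_mul_log (hA : 0 ≤ A) (hct : 1 < c * t)
    (hAc : 2 ≤ log (A * c)) (h : t = A * log (c * t)) :
    t ≤ A * (log (A * c) + 2 * log (log (A * c))) := by
  have hL : log (A * c) = log (c * t) - log (log (c * t)) :=
    log_mul_eq_sub_log_of_eq_mul_log (one_pos.trans hct).ne' h
  have hloglog : log (log (c * t)) ≤ 2 * log (log (A * c)) := by
    rw [hL] at hAc ⊢
    exact log_le_two_mul_log_sub_log (log_pos hct) hAc
  calc t = A * log (c * t) := h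
    _ ≤ A * (log (A * c) + 2 * log (log (A * c))) := by gcongr; linarith

end EqMulLog

theorem two_le_log_mul {A c : ℝ} (hA : exp 1 ≤ A) (hc : exp 1 ≤ c) : 2 ≤ log (A * c) := by
  have hA0 : 0 < A := (exp_pos 1).trans_le hA
  have hc0 : 0 < c := (exp_pos 1).trans_le hc
  rw [log_mul hA0.ne' hc0.ne']
  linarith [(le_log_iff_exp_le hA0).mpr hA, (le_log_iff_exp_le hc0).mpr hc]

theorem log_log_mul_div_nonneg {A b c : ℝ} (hc : exp 1 ≤ c) (hb : 0 < b) (hbA : b ≤ A) :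
    0 ≤ log (log (A * c / b)) := by
  have hc0 : 0 < c := (exp_pos 1).trans_le hc
  have hle : c ≤ A * c / b := by
    rw [le_div_iff₀ hb, mul_comm]
    gcongr
  exact log_nonneg ((le_log_iff_exp_le (hc0.trans_le hle)).mpr (hc.trans hle))

/-- The confidence radius `α(t)` of the paper, with the constant `c̄` as explicit argument `c`. -/
noncomputable def confidenceRadius (c t : ℝ) : ℝ :=
  √(2 * log (c * t) / t)

theorem eq_mul_log_of_confidenceRadius_eq {c t ε : ℝ} (hε : 0 < ε)
    (h : confidenceRadius c t = ε) : t = 2 / ε ^ 2 * log (c * t) := by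
  have ht : t ≠ 0 := by
    rintro rfl
    simp [confidenceRadius, hε.ne] at h
  have hsq : ε * ε = 2 * log (c * t) / t := (sqrt_eq_iff_mul_self_eq_of_pos hε).mp h
  field_simp at hsq ⊢
  linarith

theorem eq_mul_log_of_confidenceRadius_eq_div_eight {c t d : ℝ} (hd : 0 < d)
    (h : confidenceRadius c t = d / 8) : t = 128 / d ^ 2 * log (c * t) := by
  convert eq_mul_log_of_confidenceRadius_eq (by positivity) h using 2
  ring

theorem time_difference_bound_general {c Δ σ t₁ t₂ : ℝ} (hc : exp 1 ≤ c) (hΔ : 0 < Δ)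
    (hΔe : exp 1 * Δ ^ 2 ≤ 128) (hσ : 0 < σ) (ht₁ : 1 ≤ t₁) (ht₂ : 1 ≤ t₂)
    (h₁ : confidenceRadius c t₁ = σ * Δ / 8) (h₂ : confidenceRadius c t₂ = Δ / 8) :
    t₂ - t₁ ≤
      (128 / Δ ^ 2 * log (128 * c / Δ ^ 2)
        - 128 / (σ ^ 2 * Δ ^ 2) * log (128 * c / (σ ^ 2 * Δ ^ 2)))
      + (256 / Δ ^ 2 * log (log (128 * c / Δ ^ 2))
        - 128 / (σ ^ 2 * Δ ^ 2) * log (log (128 * c / (σ ^ 2 * Δ ^ 2)))) := by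
  have hc0 : 0 < c := (exp_pos 1).trans_le hc
  have hct₁ : exp 1 ≤ c * t₁ := hc.trans (le_mul_of_one_le_right hc0.le ht₁)
  have hct₂ : 1 < c * t₂ :=
    (one_lt_exp_iff.mpr one_pos).trans_le (hc.trans (le_mul_of_one_le_right hc0.le ht₂))
  have hL : 2 ≤ log (128 / Δ ^ 2 * c) :=
    two_le_log_mul ((le_div_iff₀ (by positivity)).mpr hΔe) hc
  have hlower := mul_log_add_log_log_le_of_eq_mul_log (by positivity) hct₁
    (eq_mul_log_of_confidenceRadius_eq_div_eight (by positivity) h₁)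
  have hupper := le_mul_log_add_two_mul_log_log_of_eq_mul_log (by positivity) hct₂ hL
    (eq_mul_log_of_confidenceRadius_eq_div_eight hΔ h₂)
  rw [mul_pow, div_mul_eq_mul_div 128 _ c] at hlower
  rw [div_mul_eq_mul_div 128 _ c] at hupper
  linear_combination hlower + hupper

/-- Time-difference bound for confidence radii (Lemma 4 of the paper). With
`α(t) = sqrt(2 log(c̄ t) / t)` for `t ≥ 1` and `c̄ > e`, given `Δ ∈ (0,1)`, `σ > 1` with
`σΔ ≤ 1`, and `t̃, t' ≥ 1` with `α(t̃) = σΔ/8` and `α(t') = Δ/8`, the difference `t' - t̃`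
is bounded as stated. -/
theorem time_difference_bound (cbar Δ σ ttil t' : ℝ)
    (hc : Real.exp 1 < cbar)
    (hΔ0 : 0 < Δ) (hΔ1 : Δ < 1) (hσ : 1 < σ) (hσΔ : σ * Δ ≤ 1)
    (httil : 1 ≤ ttil) (ht' : 1 ≤ t')
    (h1 : Real.sqrt (2 * Real.log (cbar * ttil) / ttil) = σ * Δ / 8)
    (h2 : Real.sqrt (2 * Real.log (cbar * t') / t') = Δ / 8) :
    t' - ttil ≤
      (128 / Δ ^ 2 * Real.log (128 * cbar / Δ ^ 2)
        - 128 / (σ ^ 2 * Δ ^ 2) * Real.log (128 * cbar / (σ ^ 2 * Δ ^ 2)))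
      + (512 / Δ ^ 2 * Real.log (Real.log (128 * cbar / Δ ^ 2))
        - 32 / (σ ^ 2 * Δ ^ 2) * Real.log (Real.log (128 * cbar / (σ ^ 2 * Δ ^ 2)))) := by
  have hΔsq : Δ ^ 2 ≤ 1 := pow_le_one₀ hΔ0.le hΔ1.le
  have hσΔsq : σ ^ 2 * Δ ^ 2 ≤ 1 := mul_pow σ Δ 2 ▸ pow_le_one₀ (by positivity) hσΔ
  have hloglog : 0 ≤ log (log (128 * cbar / Δ ^ 2)) :=
    log_log_mul_div_nonneg hc.le (by positivity) (by linarith)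
  have hloglog_σ : 0 ≤ log (log (128 * cbar / (σ ^ 2 * Δ ^ 2))) :=
    log_log_mul_div_nonneg hc.le (by positivity) (by linarith)
  refine (time_difference_bound_general hc.le hΔ0 ?_ (one_pos.trans hσ) httil ht' h1 h2).trans ?_
  · nlinarith [exp_one_lt_d9]
  · gcongr <;> norm_num
end

section
/- Branch identification for solutions of the confidence-radius equation: let c̄ > e be a real constant and define α(t) = sqrt(2·log(c̄·t)/t) for real t ≥ 1. For any real θ > 0, if t ≥ 1 is a real number satisfying α(t) = θ, then the number w := −θ²·t/2 satisfies w·exp(w) = −θ²/(2·c̄) and w < −1 (i.e., the solution t equals −(2/θ²)·W₋₁(−θ²/(2·c̄)), where W₋₁ is the branch of the Lambert W function taking values ≤ −1). -/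
open Real

lemma neg_log_mul_exp_neg_log {x : ℝ} (hx : 0 < x) : -log x * exp (-log x) = -(log x / x) := by
  rw [exp_neg, exp_log hx, neg_mul, div_eq_mul_inv]

section ConfidenceRadius

variable {c t θ : ℝ}

lemma sq_mul_div_two_eq_log_of_confidenceRadius_eq (ht : t ≠ 0) (hθ : 0 < θ)
    (hα : confidenceRadius c t = θ) : θ ^ 2 * t / 2 = log (c * t) := by
  have hsq : θ * θ = 2 * log (c * t) / t := (sqrt_eq_iff_mul_self_eq_of_pos hθ).mp hα
  rw [sq, hsq]
  field_simp

lemma lambert_equation_of_confidenceRadius_eq (hct : 0 < c * t) (hθ : 0 < θ)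
    (hα : confidenceRadius c t = θ) :
    -(θ ^ 2 * t / 2) * exp (-(θ ^ 2 * t / 2)) = -(θ ^ 2 / (2 * c)) := by
  have ht : t ≠ 0 := right_ne_zero_of_mul hct.ne'
  have hlog := sq_mul_div_two_eq_log_of_confidenceRadius_eq ht hθ hα
  calc -(θ ^ 2 * t / 2) * exp (-(θ ^ 2 * t / 2))
      = -(log (c * t) / (c * t)) := by rw [hlog, neg_log_mul_exp_neg_log hct]
    _ = -(θ ^ 2 * t / 2 / (c * t)) := by rw [hlog]
    _ = -(θ ^ 2 / (2 * c)) := by rw [div_div, ← mul_assoc, mul_div_mul_right _ _ ht]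

lemma neg_sq_mul_div_two_lt_neg_one_iff (hct : 0 < c * t) (hθ : 0 < θ)
    (hα : confidenceRadius c t = θ) : -(θ ^ 2 * t / 2) < -1 ↔ exp 1 < c * t := by
  have ht : t ≠ 0 := right_ne_zero_of_mul hct.ne'
  rw [sq_mul_div_two_eq_log_of_confidenceRadius_eq ht hθ hα, neg_lt_neg_iff,
    lt_log_iff_exp_lt hct]

theorem branch_identification_general (hct : exp 1 < c * t) (hθ : 0 < θ)
    (hα : confidenceRadius c t = θ) :
    -(θ ^ 2 * t / 2) * exp (-(θ ^ 2 * t / 2)) = -(θ ^ 2 / (2 * c)) ∧ -(θ ^ 2 * t / 2) < -1 := by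
  have hct_pos : 0 < c * t := (exp_pos 1).trans hct
  exact ⟨lambert_equation_of_confidenceRadius_eq hct_pos hθ hα,
    (neg_sq_mul_div_two_lt_neg_one_iff hct_pos hθ hα).mpr hct⟩

end ConfidenceRadius

/-- Branch identification for solutions of the confidence-radius equation: with
`α(t) = sqrt(2 log(c̄ t) / t)` and `c̄ > e`, if `θ > 0` and `t ≥ 1` satisfies `α(t) = θ`,
then `w := -θ² t / 2` satisfies `w · exp w = -θ² / (2 c̄)` and `w < -1`, i.e. `t` corresponds
to the `W₋₁` branch of the Lambert W function. -/
theorem branch_identification (cbar θ t : ℝ)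
    (hc : Real.exp 1 < cbar) (hθ : 0 < θ) (ht : 1 ≤ t)
    (hα : Real.sqrt (2 * Real.log (cbar * t) / t) = θ) :
    (-(θ ^ 2 * t / 2)) * Real.exp (-(θ ^ 2 * t / 2)) = -(θ ^ 2 / (2 * cbar)) ∧
      -(θ ^ 2 * t / 2) < -1 :=
  branch_identification_general
    (hc.trans_le (le_mul_of_one_le_right ((exp_pos 1).trans hc).le ht)) hθ hα
end

section
/- The trimming operator returns a value in the convex hull of honest values: let C be a finite set, m : C → ℝ, f a natural number, and J ⊆ C with |J| ≤ f; write H = C \ J for the honest indices. Suppose w ∈ C satisfies |{ u ∈ C \ {w} : m(u) ≥ m(w) }| ≥ f and |{ u ∈ C \ {w} : m(u) ≤ m(w) }| ≥ f (as holds for any index whose value survives the removal of the f largest and f smallest values from {m(u)}_{u ∈ C}). Then H is nonempty and there exist u, v ∈ H with m(v) ≤ m(w) ≤ m(u); in particular m(w) lies in the convex hull of { m(i) : i ∈ H }. -/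
theorem exists_mem_sdiff_of_card_le_card_filter_erase {ι : Type*} [DecidableEq ι]
    {C J : Finset ι} {w : ι} {p : ι → Prop} [DecidablePred p] (hw : w ∈ C) (hpw : p w)
    (hJ : J.card ≤ ((C.erase w).filter p).card) : ∃ u ∈ C \ J, p u := by
  have card_lt : J.card < (C.filter p).card := by
    rw [Finset.filter_erase] at hJ
    exact hJ.trans_lt (Finset.card_erase_lt_of_mem (Finset.mem_filter.2 ⟨hw, hpw⟩))
  obtain ⟨u, hu, huJ⟩ := Finset.exists_mem_notMem_of_card_lt_card card_lt
  obtain ⟨huC, hpu⟩ := Finset.mem_filter.1 hu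
  exact ⟨u, Finset.mem_sdiff.2 ⟨huC, huJ⟩, hpu⟩

theorem mem_convexHull_of_le_of_le {𝕜 : Type*} [Field 𝕜] [LinearOrder 𝕜] [IsStrictOrderedRing 𝕜]
    {s : Set 𝕜} {a b x : 𝕜} (ha : a ∈ s) (hb : b ∈ s) (hax : a ≤ x) (hxb : x ≤ b) :
    x ∈ convexHull 𝕜 s :=
  segment_subset_convexHull ha hb (Icc_subset_segment ⟨hax, hxb⟩)

theorem trim_in_convex_hull_of_honest_general {ι 𝕜 : Type*} [DecidableEq ι] [Field 𝕜]
    [LinearOrder 𝕜] [IsStrictOrderedRing 𝕜] {C J : Finset ι} {m : ι → 𝕜} {f : ℕ} {w : ι}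
    (hJ : J.card ≤ f) (hw : w ∈ C)
    (hge : f ≤ ((C.erase w).filter (fun u => m w ≤ m u)).card)
    (hle : f ≤ ((C.erase w).filter (fun u => m u ≤ m w)).card) :
    (C \ J).Nonempty ∧
    (∃ u ∈ C \ J, ∃ v ∈ C \ J, m v ≤ m w ∧ m w ≤ m u) ∧
    m w ∈ convexHull 𝕜 (m '' ↑(C \ J)) := by
  obtain ⟨u, hu, hwu⟩ :=
    exists_mem_sdiff_of_card_le_card_filter_erase hw (le_refl (m w)) (hJ.trans hge)
  obtain ⟨v, hv, hvw⟩ :=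
    exists_mem_sdiff_of_card_le_card_filter_erase hw (le_refl (m w)) (hJ.trans hle)
  exact ⟨⟨u, hu⟩, ⟨u, hu, v, hv, hvw, hwu⟩,
    mem_convexHull_of_le_of_le (Set.mem_image_of_mem m hv) (Set.mem_image_of_mem m hu) hvw hwu⟩

/-- The trimming operator returns a value in the convex hull of honest values: if `w ∈ C`
has at least `f` values above it and at least `f` values below it among `C \ {w}` (as holds
for any value surviving the `Trim` operation with parameter `f`), and the adversarial set
`J ⊆ C` has at most `f` elements, then the honest set `H = C \ J` is nonempty and there are
honest `u, v` with `m v ≤ m w ≤ m u`; in particular `m w` lies in the convex hull of the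
honest values. -/
theorem trim_in_convex_hull_of_honest {ι : Type*} [DecidableEq ι]
    (C : Finset ι) (m : ι → ℝ) (f : ℕ)
    (J : Finset ι) (hJC : J ⊆ C) (hJ : J.card ≤ f)
    (w : ι) (hw : w ∈ C)
    (hge : f ≤ ((C.erase w).filter (fun u => m w ≤ m u)).card)
    (hle : f ≤ ((C.erase w).filter (fun u => m u ≤ m w)).card) :
    (C \ J).Nonempty ∧
    (∃ u ∈ C \ J, ∃ v ∈ C \ J, m v ≤ m w ∧ m w ≤ m u) ∧
    m w ∈ convexHull ℝ (m '' ↑(C \ J)) :=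
  trim_in_convex_hull_of_honest_general hJ hw hge hle
end

section
/- Explicit per-arm elimination time for the Fed-SEL confidence radius: let δ ∈ (0,1) and let M ≥ 2 be a natural number; set c̄ = sqrt(4·M/δ) and α(t) = sqrt( log(4·M·t²/δ) / t ) for real t ≥ 1 (so that α(t) = sqrt(2·log(c̄·t)/t)). Then for every Δ ∈ (0,1] and every real t ≥ 1 with t ≥ (32/Δ²)·( log(32·c̄/Δ²) + 4·log(log(32·c̄/Δ²)) ), one has α(t) ≤ Δ/4. -/
/-!
With `r = 32 / Δ²`, `L = log (r * c̄)` and `s = t / r`, the claim `α t ≤ Δ / 4` is equivalent to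
`log (c̄ * t) ≤ s`, that is, to `L ≤ s - log s`. The right-hand side is increasing for `s ≥ 1`, so
it is enough to take `s = L + 4 * log L`, where the inequality becomes `L + 4 * log L ≤ L ^ 4`.
-/

open Real

theorem monotoneOn_sub_log : MonotoneOn (fun x : ℝ => x - log x) (Set.Ici 1) := by
  intro a (ha : 1 ≤ a) b _ hab
  have ha_pos : 0 < a := by linarith
  have hb_pos : 0 < b := by linarith
  have log_quotient : log b - log a ≤ b / a - 1 := by
    rw [← log_div hb_pos.ne' ha_pos.ne']
    exact log_le_sub_one_of_pos (div_pos hb_pos ha_pos)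
  have quotient_le : b / a - 1 ≤ b - a := by
    rw [div_sub_one ha_pos.ne']
    exact div_le_self (sub_nonneg.mpr hab) ha
  change a - log a ≤ b - log b
  linarith

theorem one_le_add_four_mul_log {L : ℝ} (hL : 1 ≤ L) : 1 ≤ L + 4 * log L := by
  linarith [log_nonneg hL]

/-- At `L = 1` both sides agree, with slopes `5` and `4`, so the inequality is false just above `1`;
`6 / 5` is a round number above the real root of `L ^ 3 + L ^ 2 + L = 4`. -/
theorem add_four_mul_log_le_pow_four {L : ℝ} (hL : 6 / 5 ≤ L) : L + 4 * log L ≤ L ^ 4 := by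
  have cubic_bound : 4 ≤ L ^ 3 + L ^ 2 + L := by
    have sq_bound : (6 / 5 : ℝ) ^ 2 ≤ L ^ 2 := by gcongr
    have cube_bound : (6 / 5 : ℝ) ^ 3 ≤ L ^ 3 := by gcongr
    linarith
  calc L + 4 * log L ≤ L + 4 * (L - 1) := by
        gcongr
        exact log_le_sub_one_of_pos (by linarith)
    _ = L ^ 4 - (L - 1) * (L ^ 3 + L ^ 2 + L - 4) := by ring
    _ ≤ L ^ 4 := sub_le_self _ (mul_nonneg (by linarith) (by linarith))

theorem add_log_le_self {L s : ℝ} (hL : 6 / 5 ≤ L) (hs : L + 4 * log L ≤ s) :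
    L + log s ≤ s := by
  have one_le : 1 ≤ L + 4 * log L := one_le_add_four_mul_log (by linarith)
  have log_threshold : log (L + 4 * log L) ≤ 4 * log L := by
    calc log (L + 4 * log L) ≤ log (L ^ 4) :=
          log_le_log (by linarith) (add_four_mul_log_le_pow_four hL)
      _ = 4 * log L := by rw [log_pow, Nat.cast_ofNat]
  have sub_log_le : L + 4 * log L - log (L + 4 * log L) ≤ s - log s :=
    monotoneOn_sub_log one_le (one_le.trans hs) hs
  linarith

theorem log_mul_le_div {c r t : ℝ} (hc : 0 < c) (hr : 0 < r) (ht : 0 < t)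
    (hL : 6 / 5 ≤ log (r * c)) (hrt : r * (log (r * c) + 4 * log (log (r * c))) ≤ t) :
    log (c * t) ≤ t / r := by
  calc log (c * t) = log (r * c * (t / r)) := by
        congr 1
        field_simp
    _ = log (r * c) + log (t / r) := log_mul (by positivity) (by positivity)
    _ ≤ t / r := add_log_le_self hL ((le_div_iff₀' hr).mpr hrt)

theorem sqrt_log_mul_sq_div_le_iff {K t ε : ℝ} (hK : 0 ≤ K) (ht : 0 < t) (hε : 0 ≤ ε) :
    √(log (K * t ^ 2) / t) ≤ ε ↔ log (√K * t) ≤ ε ^ 2 / 2 * t := by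
  have log_eq : log (K * t ^ 2) = 2 * log (√K * t) := by
    rw [← sq_sqrt hK, ← mul_pow, log_pow, Nat.cast_ofNat, sq_sqrt hK]
  rw [sqrt_le_left hε, div_le_iff₀ ht, log_eq]
  constructor <;> intro h <;> linarith

theorem explicit_elimination_time_general {δ M Δ t : ℝ} (hδ : 0 < δ) (hM : 0 < M) (hΔ : 0 < Δ)
    (hL : 6 / 5 ≤ log (32 * √(4 * M / δ) / Δ ^ 2))
    (ht : 32 / Δ ^ 2 * (log (32 * √(4 * M / δ) / Δ ^ 2)
      + 4 * log (log (32 * √(4 * M / δ) / Δ ^ 2))) ≤ t) :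
    √(log (4 * M * t ^ 2 / δ) / t) ≤ Δ / 4 := by
  have hK : 0 < 4 * M / δ := by positivity
  have hr : 0 < 32 / Δ ^ 2 := by positivity
  have ht_pos : 0 < t :=
    (mul_pos hr (one_pos.trans_le (one_le_add_four_mul_log (by linarith)))).trans_le ht
  rw [mul_div_right_comm] at hL ht
  rw [mul_div_right_comm, sqrt_log_mul_sq_div_le_iff hK.le ht_pos (by positivity)]
  calc log (√(4 * M / δ) * t) ≤ t / (32 / Δ ^ 2) :=
        log_mul_le_div (sqrt_pos.mpr hK) hr ht_pos hL ht
    _ = (Δ / 4) ^ 2 / 2 * t := by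
        field_simp
        norm_num

theorem six_fifths_le_log_thirtytwo_mul_div_sq {c Δ : ℝ} (hc : 1 ≤ c) (hΔ0 : 0 < Δ)
    (hΔ1 : Δ ≤ 1) : 6 / 5 ≤ log (32 * c / Δ ^ 2) := by
  have le_quotient : 32 ≤ 32 * c / Δ ^ 2 := by
    calc (32 : ℝ) ≤ 32 * c := by linarith
      _ ≤ 32 * c / Δ ^ 2 :=
        le_div_self (by positivity) (by positivity) (pow_le_one₀ hΔ0.le hΔ1)
  calc (6 / 5 : ℝ) ≤ 5 * log 2 := by linarith [log_two_gt_d9]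
    _ = log 32 := by rw [← Nat.cast_ofNat (n := 5), ← log_pow]; norm_num
    _ ≤ log (32 * c / Δ ^ 2) := log_le_log (by norm_num) le_quotient

/-- Explicit per-arm elimination time for the Fed-SEL confidence radius: with `δ ∈ (0,1)`,
`M ≥ 2`, `c̄ = sqrt(4M/δ)`, and `α(t) = sqrt(log(4 M t² / δ) / t)`, for every `Δ ∈ (0,1]`
and every real `t ≥ 1` with `t ≥ (32/Δ²)(log(32 c̄ / Δ²) + 4 log log(32 c̄ / Δ²))`, one has
`α(t) ≤ Δ/4`. -/
theorem explicit_elimination_time (δ : ℝ) (M : ℕ)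
    (hδ0 : 0 < δ) (hδ1 : δ < 1) (hM : 2 ≤ M)
    (Δ t : ℝ) (hΔ0 : 0 < Δ) (hΔ1 : Δ ≤ 1) (ht1 : 1 ≤ t)
    (ht : 32 / Δ ^ 2 * (Real.log (32 * Real.sqrt (4 * (M : ℝ) / δ) / Δ ^ 2)
        + 4 * Real.log (Real.log (32 * Real.sqrt (4 * (M : ℝ) / δ) / Δ ^ 2))) ≤ t) :
    Real.sqrt (Real.log (4 * (M : ℝ) * t ^ 2 / δ) / t) ≤ Δ / 4 := by
  have two_le_M : (2 : ℝ) ≤ M := by exact_mod_cast hM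
  have one_le_sqrt_ratio : 1 ≤ √(4 * (M : ℝ) / δ) :=
    one_le_sqrt.mpr ((one_le_div hδ0).mpr (by linarith))
  exact explicit_elimination_time_general hδ0 (by linarith) hΔ0
    (six_fifths_le_log_thirtytwo_mul_div_sq one_le_sqrt_ratio hΔ0 hΔ1) ht
end
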